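/- Let (t_k) be a sequence of positive reals with t_k → 0, for each k let (x^k,y^k) be a Karush–Kuhn–Tucker point of the Scholtes-type regularization S(t_k), and suppose (x^k,y^k) → (x̄,ȳ) where (x̄,ȳ) is a nondegenerate T-stationary point of the regularized continuous reformulation R. Then for all sufficiently large k the active inequality index sets coincide: Q0(x̄) = Q0(x^k). -/

import Mathlib

open scoped Classical
open Finset Filter Topology

noncomputable section
namespace Scholtes

/-- Vectors in ℝⁿ. -/
abbrev Vec (n : ℕ) := Fin n → ℝ

variable {n : ℕ} {P Q : Type*} [Fintype P] [Fintype Q]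

/-- Euclidean dot product. -/
def dot (u v : Vec n) : ℝ := ∑ i, u i * v i

/-- Gradient: vector of partial derivatives. -/
def grad (f : Vec n → ℝ) (x : Vec n) : Vec n := fun i => fderiv ℝ f x (Pi.single i 1)

/-- Hessian bilinear form of `L` at `z`, evaluated at directions `ξ`, `ζ`. -/
def hess (L : Vec n × Vec n → ℝ) (z ξ ζ : Vec n × Vec n) : ℝ :=
  fderiv ℝ (fun w => fderiv ℝ L w ξ) z ζ

/-- The pair vector (e_i, 0) ∈ ℝ²ⁿ. -/
def ex (i : Fin n) : Vec n × Vec n := (Pi.single i 1, 0)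

/-- The pair vector (0, e_i) ∈ ℝ²ⁿ. -/
def ey (i : Fin n) : Vec n × Vec n := (0, Pi.single i 1)

/-- The pair vector (0, e) ∈ ℝ²ⁿ, where e is the all-ones vector. -/
def eAll : Vec n × Vec n := (0, fun _ => 1)

/-- The pair vector (y_i e_i, x_i e_i) ∈ ℝ²ⁿ. -/
def hvec (x y : Vec n) (i : Fin n) : Vec n × Vec n := (Pi.single i (y i), Pi.single i (x i))

/-- The number of negative eigenvalues of the bilinear form `B` restricted to the
(sub)space `T`, expressed as the maximal dimension of a linear subspace of `T` on
which the associated quadratic form is negative definite. -/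
def negIndex (B : (Vec n × Vec n) → (Vec n × Vec n) → ℝ) (T : (Vec n × Vec n) → Prop) : ℕ :=
  sSup {d : ℕ | ∃ W : Submodule ℝ (Vec n × Vec n),
    (∀ ξ ∈ W, T ξ) ∧ Module.finrank ℝ W = d ∧ ∀ ξ ∈ W, ξ ≠ 0 → B ξ ξ < 0}

/-- The data and standing assumptions of the paper: objective `f`, equality
constraints `h`, inequality constraints `g`, positive pairwise different linear
coefficients `c`, cardinality bound `s` and regularization parameter `ε`. -/
structure Setting (n : ℕ) (P Q : Type*) [Fintype P] [Fintype Q] where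
  f : Vec n → ℝ
  h : P → Vec n → ℝ
  g : Q → Vec n → ℝ
  c : Vec n
  s : ℕ
  ε : ℝ
  hn : 1 ≤ n
  hf : ContDiff ℝ 2 f
  hh : ∀ p, ContDiff ℝ 2 (h p)
  hg : ∀ q, ContDiff ℝ 2 (g q)
  hcpos : ∀ i, 0 < c i
  hcinj : Function.Injective c
  hs : s < n
  hεpos : 0 < ε
  hεle : ε ≤ 1 / ((n : ℝ) - s)

/-- Index set a01: x̄_i = 0, ȳ_i > 0. -/
def a01 (x y : Vec n) : Finset (Fin n) := univ.filter fun i => x i = 0 ∧ 0 < y i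

/-- Index set a10: x̄_i ≠ 0, ȳ_i = 0. -/
def a10 (x y : Vec n) : Finset (Fin n) := univ.filter fun i => x i ≠ 0 ∧ y i = 0

/-- Index set a00: x̄_i = 0, ȳ_i = 0. -/
def a00 (x y : Vec n) : Finset (Fin n) := univ.filter fun i => x i = 0 ∧ y i = 0

/-- Index set N(y): y_i = 0. -/
def Nact (y : Vec n) : Finset (Fin n) := univ.filter fun i => y i = 0

/-- Index set H≥(x,y): x_i y_i = −t. -/
def Hge (t : ℝ) (x y : Vec n) : Finset (Fin n) := univ.filter fun i => x i * y i = -t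

/-- Index set H≤(x,y): x_i y_i = t. -/
def Hle (t : ℝ) (x y : Vec n) : Finset (Fin n) := univ.filter fun i => x i * y i = t

/-- Index set H(x,y) = H≥ ∪ H≤. -/
def Hact (t : ℝ) (x y : Vec n) : Finset (Fin n) := Hge t x y ∪ Hle t x y

/-- Active inequality constraints Q0(x). -/
def Q0 (D : Setting n P Q) (x : Vec n) : Finset Q := univ.filter fun q => D.g q x = 0

/-- Active upper bounds E(y): y_i = 1 + ε. -/
def Eact (D : Setting n P Q) (y : Vec n) : Finset (Fin n) := univ.filter fun i => y i = 1 + D.ε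

/-- Index set O(x,y) = complement of E(y) ∪ N(y) ∪ H(x,y). -/
def Oact (D : Setting n P Q) (t : ℝ) (x y : Vec n) : Finset (Fin n) :=
  (Eact D y ∪ Nact y ∪ Hact t x y)ᶜ

/-- Feasibility for the regularized continuous reformulation R. -/
def feasR (D : Setting n P Q) (x y : Vec n) : Prop :=
  (∀ p, D.h p x = 0) ∧ (∀ q, 0 ≤ D.g q x) ∧ ((n : ℝ) - D.s ≤ ∑ i, y i) ∧
  (∀ i, x i * y i = 0) ∧ (∀ i, 0 ≤ y i ∧ y i ≤ 1 + D.ε)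

/-- Feasibility for the Scholtes-type regularization S(t). -/
def feasS (D : Setting n P Q) (t : ℝ) (x y : Vec n) : Prop :=
  (∀ p, D.h p x = 0) ∧ (∀ q, 0 ≤ D.g q x) ∧ ((n : ℝ) - D.s ≤ ∑ i, y i) ∧
  (∀ i, -t ≤ x i * y i ∧ x i * y i ≤ t) ∧ (∀ i, 0 ≤ y i ∧ y i ≤ 1 + D.ε)

/-- Multipliers for T-stationarity (defined on the whole index ranges). -/
structure TMult (n : ℕ) (P Q : Type*) where
  lam : P → ℝ
  mu1 : Q → ℝ
  mu2 : Fin n → ℝ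
  mu3 : ℝ
  sig1 : Fin n → ℝ
  sig2 : Fin n → ℝ
  rho1 : Fin n → ℝ
  rho2 : Fin n → ℝ

/-- The T-stationarity equation (1) of Definition 2. -/
def TStatEq (D : Setting n P Q) (x y : Vec n) (M : TMult n P Q) : Prop :=
  ((grad D.f x, D.c) : Vec n × Vec n) =
    (∑ p, M.lam p • ((grad (D.h p) x, (0 : Vec n)) : Vec n × Vec n))
    + (∑ q ∈ Q0 D x, M.mu1 q • ((grad (D.g q) x, (0 : Vec n)) : Vec n × Vec n))
    - (∑ i ∈ Eact D y, M.mu2 i • ey i)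
    + M.mu3 • eAll
    + (∑ i ∈ a01 x y, M.sig1 i • ex i)
    + (∑ i ∈ a10 x y, M.sig2 i • ey i)
    + (∑ i ∈ a00 x y, (M.rho1 i • ex i + M.rho2 i • ey i))

/-- (x,y) is a T-stationary point of R with multipliers M. -/
def TStatAt (D : Setting n P Q) (x y : Vec n) (M : TMult n P Q) : Prop :=
  feasR D x y ∧
  (∀ q ∈ Q0 D x, 0 ≤ M.mu1 q) ∧
  (∀ i ∈ Eact D y, 0 ≤ M.mu2 i) ∧
  0 ≤ M.mu3 ∧
  M.mu3 * ((∑ i, y i) - ((n : ℝ) - D.s)) = 0 ∧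
  (∀ i ∈ a00 x y, M.rho1 i = 0 ∨ M.rho2 i ≤ 0) ∧
  TStatEq D x y M

/-- (x,y) is a T-stationary point of R. -/
def TStat (D : Setting n P Q) (x y : Vec n) : Prop := ∃ M, TStatAt D x y M

/-- MPOC-tailored LICQ at a feasible point (x,y) of R: the indicated family of
vectors in ℝ²ⁿ is linearly independent. -/
def MPOC_LICQ (D : Setting n P Q) (x y : Vec n) : Prop :=
  ∀ (lam : P → ℝ) (mu1 : Q → ℝ) (mu2 : Fin n → ℝ) (mu3 : ℝ) (s1 s2 : Fin n → ℝ),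
    ((∑ i, y i) ≠ (n : ℝ) - D.s → mu3 = 0) →
    (∑ p, lam p • ((grad (D.h p) x, (0 : Vec n)) : Vec n × Vec n))
    + (∑ q ∈ Q0 D x, mu1 q • ((grad (D.g q) x, (0 : Vec n)) : Vec n × Vec n))
    + (∑ i ∈ Eact D y, mu2 i • ey i)
    + mu3 • eAll
    + (∑ i ∈ a01 x y ∪ a00 x y, s1 i • ex i)
    + (∑ i ∈ a10 x y ∪ a00 x y, s2 i • ey i) = 0 →
    (∀ p, lam p = 0) ∧ (∀ q ∈ Q0 D x, mu1 q = 0) ∧ (∀ i ∈ Eact D y, mu2 i = 0) ∧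
    mu3 = 0 ∧ (∀ i ∈ a01 x y ∪ a00 x y, s1 i = 0) ∧ (∀ i ∈ a10 x y ∪ a00 x y, s2 i = 0)

/-- The Lagrange function L^R associated with the T-stationary point (x̄,ȳ)
and multipliers M. -/
def LagR (D : Setting n P Q) (xb yb : Vec n) (M : TMult n P Q) (z : Vec n × Vec n) : ℝ :=
  D.f z.1 + dot D.c z.2
    - (∑ p, M.lam p * D.h p z.1)
    - (∑ q ∈ Q0 D xb, M.mu1 q * D.g q z.1)
    + (∑ i ∈ Eact D yb, M.mu2 i * (z.2 i - (1 + D.ε)))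
    - M.mu3 * ((∑ i, z.2 i) - ((n : ℝ) - D.s))
    - (∑ i ∈ a01 xb yb, M.sig1 i * z.1 i)
    - (∑ i ∈ a10 xb yb, M.sig2 i * z.2 i)
    - (∑ i ∈ a00 xb yb, (M.rho1 i * z.1 i + M.rho2 i * z.2 i))

/-- Membership in the tangent space T^R at (x̄,ȳ). -/
def inTR (D : Setting n P Q) (x y : Vec n) (ξ : Vec n × Vec n) : Prop :=
  (∀ p, dot (grad (D.h p) x) ξ.1 = 0) ∧
  (∀ q ∈ Q0 D x, dot (grad (D.g q) x) ξ.1 = 0) ∧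
  (∀ i ∈ Eact D y, ξ.2 i = 0) ∧
  ((∑ i, y i) = (n : ℝ) - D.s → (∑ i, ξ.2 i) = 0) ∧
  (∀ i ∈ a00 x y ∪ a01 x y, ξ.1 i = 0) ∧
  (∀ i ∈ a00 x y ∪ a10 x y, ξ.2 i = 0)

/-- Nondegenerate T-stationary point with multipliers M (NDT1–NDT4). -/
def NondegTStatAt (D : Setting n P Q) (x y : Vec n) (M : TMult n P Q) : Prop :=
  TStatAt D x y M ∧
  MPOC_LICQ D x y ∧
  (∀ q ∈ Q0 D x, 0 < M.mu1 q) ∧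
  (∀ i ∈ Eact D y, 0 < M.mu2 i) ∧
  ((∑ i, y i) = (n : ℝ) - D.s → 0 < M.mu3) ∧
  (∀ i ∈ a00 x y, M.rho1 i ≠ 0 ∧ M.rho2 i < 0) ∧
  (∀ ξ, inTR D x y ξ → (∀ ζ, inTR D x y ζ → hess (LagR D x y M) (x, y) ξ ζ = 0) → ξ = 0)

/-- T-index: quadratic index (number of negative eigenvalues of the restricted
Hessian of L^R) plus the biactive index |a00|. -/
def TIndex (D : Setting n P Q) (x y : Vec n) (M : TMult n P Q) : ℕ :=
  negIndex (hess (LagR D x y M) (x, y)) (inTR D x y) + (a00 x y).card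

/-- Multipliers for KKT points of S(t) (defined on the whole index ranges). -/
structure SMult (n : ℕ) (P Q : Type*) where
  lam : P → ℝ
  mu1 : Q → ℝ
  mu2 : Fin n → ℝ
  mu3 : ℝ
  etaGe : Fin n → ℝ
  etaLe : Fin n → ℝ
  nu : Fin n → ℝ

/-- The KKT equation for S(t). -/
def KKTEq (D : Setting n P Q) (t : ℝ) (x y : Vec n) (M : SMult n P Q) : Prop :=
  ((grad D.f x, D.c) : Vec n × Vec n) =
    (∑ p, M.lam p • ((grad (D.h p) x, (0 : Vec n)) : Vec n × Vec n))
    + (∑ q ∈ Q0 D x, M.mu1 q • ((grad (D.g q) x, (0 : Vec n)) : Vec n × Vec n))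
    - (∑ i ∈ Eact D y, M.mu2 i • ey i)
    + M.mu3 • eAll
    + (∑ i ∈ Hge t x y, M.etaGe i • hvec x y i)
    - (∑ i ∈ Hle t x y, M.etaLe i • hvec x y i)
    + (∑ i ∈ Nact y, M.nu i • ey i)

/-- (x,y) is a KKT point of S(t) with multipliers M. -/
def KKTAt (D : Setting n P Q) (t : ℝ) (x y : Vec n) (M : SMult n P Q) : Prop :=
  feasS D t x y ∧
  (∀ q ∈ Q0 D x, 0 ≤ M.mu1 q) ∧
  (∀ i ∈ Eact D y, 0 ≤ M.mu2 i) ∧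
  0 ≤ M.mu3 ∧
  M.mu3 * ((∑ i, y i) - ((n : ℝ) - D.s)) = 0 ∧
  (∀ i ∈ Hge t x y, 0 ≤ M.etaGe i) ∧
  (∀ i ∈ Hle t x y, 0 ≤ M.etaLe i) ∧
  (∀ i ∈ Nact y, 0 ≤ M.nu i) ∧
  KKTEq D t x y M

/-- (x,y) is a KKT point of S(t). -/
def KKT (D : Setting n P Q) (t : ℝ) (x y : Vec n) : Prop := ∃ M, KKTAt D t x y M

/-- LICQ at a feasible point (x,y) of S(t). -/
def LICQ (D : Setting n P Q) (t : ℝ) (x y : Vec n) : Prop :=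
  ∀ (lam : P → ℝ) (mu1 : Q → ℝ) (mu2 : Fin n → ℝ) (mu3 : ℝ) (eta nu : Fin n → ℝ),
    ((∑ i, y i) ≠ (n : ℝ) - D.s → mu3 = 0) →
    (∑ p, lam p • ((grad (D.h p) x, (0 : Vec n)) : Vec n × Vec n))
    + (∑ q ∈ Q0 D x, mu1 q • ((grad (D.g q) x, (0 : Vec n)) : Vec n × Vec n))
    + (∑ i ∈ Eact D y, mu2 i • ey i)
    + mu3 • eAll
    + (∑ i ∈ Hact t x y, eta i • hvec x y i)
    + (∑ i ∈ Nact y, nu i • ey i) = 0 →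
    (∀ p, lam p = 0) ∧ (∀ q ∈ Q0 D x, mu1 q = 0) ∧ (∀ i ∈ Eact D y, mu2 i = 0) ∧
    mu3 = 0 ∧ (∀ i ∈ Hact t x y, eta i = 0) ∧ (∀ i ∈ Nact y, nu i = 0)

/-- The Lagrange function L^S associated with the KKT point (x̄,ȳ) of S(t)
and multipliers M. -/
def LagS (D : Setting n P Q) (t : ℝ) (xb yb : Vec n) (M : SMult n P Q)
    (z : Vec n × Vec n) : ℝ :=
  D.f z.1 + dot D.c z.2
    - (∑ p, M.lam p * D.h p z.1)
    - (∑ q ∈ Q0 D xb, M.mu1 q * D.g q z.1)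
    + (∑ i ∈ Eact D yb, M.mu2 i * (z.2 i - (1 + D.ε)))
    - M.mu3 * ((∑ i, z.2 i) - ((n : ℝ) - D.s))
    - (∑ i ∈ Hge t xb yb, M.etaGe i * (z.1 i * z.2 i + t))
    + (∑ i ∈ Hle t xb yb, M.etaLe i * (z.1 i * z.2 i - t))
    - (∑ i ∈ Nact yb, M.nu i * z.2 i)

/-- Membership in the tangent space T^S at (x,y) for S(t). -/
def inTS (D : Setting n P Q) (t : ℝ) (x y : Vec n) (ξ : Vec n × Vec n) : Prop :=
  (∀ p, dot (grad (D.h p) x) ξ.1 = 0) ∧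
  (∀ q ∈ Q0 D x, dot (grad (D.g q) x) ξ.1 = 0) ∧
  (∀ i ∈ Eact D y, ξ.2 i = 0) ∧
  ((∑ i, y i) = (n : ℝ) - D.s → (∑ i, ξ.2 i) = 0) ∧
  (∀ i ∈ Hact t x y, y i * ξ.1 i + x i * ξ.2 i = 0) ∧
  (∀ i ∈ Nact y, ξ.2 i = 0)

/-- Nondegenerate KKT point of S(t) with multipliers M (ND1–ND3). -/
def NondegKKTAt (D : Setting n P Q) (t : ℝ) (x y : Vec n) (M : SMult n P Q) : Prop :=
  KKTAt D t x y M ∧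
  LICQ D t x y ∧
  (∀ q ∈ Q0 D x, 0 < M.mu1 q) ∧
  (∀ i ∈ Eact D y, 0 < M.mu2 i) ∧
  (∀ i ∈ Hge t x y, 0 < M.etaGe i) ∧
  (∀ i ∈ Hle t x y, 0 < M.etaLe i) ∧
  (∀ i ∈ Nact y, 0 < M.nu i) ∧
  ((∑ i, y i) = (n : ℝ) - D.s → 0 < M.mu3) ∧
  (∀ ξ, inTS D t x y ξ → (∀ ζ, inTS D t x y ζ → hess (LagS D t x y M) (x, y) ξ ζ = 0) → ξ = 0)

/-- Quadratic index of a KKT point of S(t): number of negative eigenvalues of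
the restricted Hessian of L^S. -/
def QIdx (D : Setting n P Q) (t : ℝ) (x y : Vec n) (M : SMult n P Q) : ℕ :=
  negIndex (hess (LagS D t x y M) (x, y)) (inTS D t x y)

/-- The signed multiplier of the constraints `-t ≤ x i * y i ≤ t`, extended by zero. -/
def SMult.eta (M : SMult n P Q) (t : ℝ) (x y : Vec n) (i : Fin n) : ℝ :=
  (if i ∈ Hge t x y then M.etaGe i else 0) - (if i ∈ Hle t x y then M.etaLe i else 0)

/-- The multipliers of the inequality constraints, extended by zero. -/
def SMult.mu1Ext (M : SMult n P Q) (D : Setting n P Q) (x : Vec n) (q : Q) : ℝ :=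
  if q ∈ Q0 D x then M.mu1 q else 0

lemma KKTEq.fst_apply {D : Setting n P Q} {t : ℝ} {x y : Vec n} {M : SMult n P Q}
    (h : KKTEq D t x y M) (j : Fin n) :
    grad D.f x j = ∑ p, M.lam p * grad (D.h p) x j + ∑ q, M.mu1Ext D x q * grad (D.g q) x j
      + y j * M.eta t x y j := by
  have := congrFun (congrArg Prod.fst h) j
  simp [Prod.fst_sum, Finset.sum_apply, Pi.single_apply, hvec, ey, eAll] at this
  rw [this]
  simp only [SMult.mu1Ext, SMult.eta, ite_mul, zero_mul, Finset.sum_ite_mem, Finset.univ_inter]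
  split_ifs <;> ring

lemma KKTEq.snd_apply {D : Setting n P Q} {t : ℝ} {x y : Vec n} {M : SMult n P Q}
    (h : KKTEq D t x y M) (j : Fin n) :
    D.c j = M.mu3 + x j * M.eta t x y j - (if y j = 1 + D.ε then M.mu2 j else 0)
      + (if y j = 0 then M.nu j else 0) := by
  have := congrFun (congrArg Prod.snd h) j
  simp [Prod.snd_sum, Finset.sum_apply, Pi.single_apply, hvec, ey, eAll, Eact, Nact] at this
  rw [this]
  simp only [SMult.eta]
  split_ifs <;> ring

lemma TStatEq.fst_apply {D : Setting n P Q} {x y : Vec n} {M : TMult n P Q}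
    (h : TStatEq D x y M) (j : Fin n) :
    grad D.f x j = ∑ p, M.lam p * grad (D.h p) x j
      + ∑ q, (if q ∈ Q0 D x then M.mu1 q else 0) * grad (D.g q) x j
      + ((if j ∈ a01 x y then M.sig1 j else 0) + (if j ∈ a00 x y then M.rho1 j else 0)) := by
  have := congrFun (congrArg Prod.fst h) j
  simp [Prod.fst_sum, Finset.sum_apply, Pi.single_apply, ey, ex, eAll] at this
  rw [this]
  simp only [ite_mul, zero_mul, Finset.sum_ite_mem, Finset.univ_inter]
  ring

lemma continuous_grad {f : Vec n → ℝ} (hf : ContDiff ℝ 2 f) : Continuous (grad f) :=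
  continuous_pi fun _ => (hf.continuous_fderiv (by norm_num)).clm_apply continuous_const

/-- The linear map sending multipliers of `h`, of `g` and of the coordinate vectors `e_i` to the
corresponding combination of gradients at `x`, together with those multipliers of inactive
constraints that have to vanish. -/
def multMap (D : Setting n P Q) (x : Vec n) :
    ((P → ℝ) × (Q → ℝ) × Vec n) →ₗ[ℝ] (Vec n × (Q → ℝ) × Vec n) where
  toFun v := (fun j => ∑ p, v.1 p * grad (D.h p) x j + ∑ q, v.2.1 q * grad (D.g q) x j + v.2.2 j,
    fun q => if D.g q x = 0 then 0 else v.2.1 q, fun i => if x i = 0 then 0 else v.2.2 i)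
  map_add' v w := by
    ext i
    · simp [add_mul, Finset.sum_add_distrib]; ring
    · simp only [Prod.snd_add, Prod.fst_add, Pi.add_apply]; split_ifs <;> simp
    · simp only [Prod.snd_add, Pi.add_apply]; split_ifs <;> simp
  map_smul' a v := by
    ext i
    · simp [mul_add, Finset.mul_sum, mul_assoc]
    · simp
    · simp

lemma MPOC_LICQ.multMap_injective {D : Setting n P Q} {x y : Vec n} (h : MPOC_LICQ D x y)
    (hy : ∀ i, 0 ≤ y i) : Function.Injective (multMap D x) := by
  rw [injective_iff_map_eq_zero]
  rintro ⟨l, m, a⟩ hv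
  simp only [multMap, LinearMap.coe_mk, AddHom.coe_mk, Prod.mk_eq_zero] at hv
  obtain ⟨h1, h2, h3⟩ := hv
  have hm : ∀ q, q ∉ Q0 D x → m q = 0 := fun q hq => by
    simpa [show D.g q x ≠ 0 by simpa [Q0] using hq] using congrFun h2 q
  have hI : ∀ i, i ∈ a01 x y ∪ a00 x y ↔ x i = 0 := fun i => by
    rcases (hy i).eq_or_lt with h0 | h0
    · simp [a01, a00, ← h0]
    · simp [a01, a00, h0, h0.ne']
  have ha : ∀ i, i ∉ a01 x y ∪ a00 x y → a i = 0 := fun i hi => by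
    rw [hI] at hi
    simpa [hi] using congrFun h3 i
  obtain ⟨r1, r2, -, -, r3, -⟩ := h l m 0 0 a 0 (fun _ => rfl) (by
    ext j
    · have hj := congrFun h1 j
      rw [← Finset.sum_subset (Finset.subset_univ (Q0 D x))
        (fun q _ hq => by rw [hm q hq, zero_mul])] at hj
      have haj : (if j ∈ a01 x y ∪ a00 x y then a j else 0) = a j := by
        split_ifs with hc
        · rfl
        · exact (ha j hc).symm
      simp only [Prod.fst_add, Prod.fst_sum, Prod.smul_fst, Pi.add_apply, Finset.sum_apply, ex,
        Pi.smul_apply, Pi.single_apply, smul_eq_mul, mul_ite, mul_one, mul_zero,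
        Finset.sum_ite_eq, haj]
      simpa using hj
    · simp [Prod.snd_sum, ex])
  refine Prod.ext (funext r1) (Prod.ext (funext fun q => ?_) (funext fun i => ?_))
  · by_cases hq : q ∈ Q0 D x
    exacts [r2 q hq, hm q hq]
  · by_cases hi : i ∈ a01 x y ∪ a00 x y
    exacts [r3 i hi, ha i hi]

/-- If the constraint on `∑ i, y i` is active, then some `y i` lies strictly between its bounds. -/
lemma MPOC_LICQ.exists_interior {D : Setting n P Q} {x y : Vec n} (h : MPOC_LICQ D x y)
    (hs : ∑ i, y i = (n : ℝ) - D.s) :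
    ∃ i, y i ≠ 0 ∧ y i ≠ 1 + D.ε := by
  by_contra! hc
  have hε := D.hεpos
  refine one_ne_zero (h 0 0 (fun _ => -1) 1 0 (fun _ => -1) (fun hne => absurd hs hne) ?_).2.2.2.1
  ext j
  · simp [Prod.fst_sum, ey, eAll]
  · by_cases hj : y j = 0
    · have : (0 : ℝ) ≠ 1 + D.ε := by linarith
      by_cases hx : x j = 0 <;>
      simp [Prod.snd_sum, Finset.sum_apply, ey, eAll, Eact, a10, a00, Pi.single_apply, hj, hx, this]
    · have h1 := hc j hj
      have h2 : 1 + D.ε ≠ 0 := by linarith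
      simp [Prod.snd_sum, Finset.sum_apply, ey, eAll, Eact, a10, a00, Pi.single_apply, h1, h2]

/-- Solutions of asymptotically perturbed injective linear systems converge. -/
lemma tendsto_of_injective_of_isLittleO {ι V W : Type*} [NormedAddCommGroup V] [NormedSpace ℝ V]
    [FiniteDimensional ℝ V] [NormedAddCommGroup W] [NormedSpace ℝ W]
    {A : V →ₗ[ℝ] W} (hA : Function.Injective A) {l : Filter ι} {v : ι → V} {b : V}
    (h : (fun k => A (v k) - A b) =o[l] fun k => 1 + ‖v k‖) : Tendsto v l (𝓝 b) := by
  obtain ⟨K, -, hK⟩ := A.exists_antilipschitzWith (LinearMap.ker_eq_bot.2 hA)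
  have h1 : (fun k => v k - b) =o[l] fun k => 1 + ‖v k‖ := by
    refine (Asymptotics.IsBigO.of_bound K (Eventually.of_forall fun k => ?_)).trans_isLittleO h
    simpa [dist_eq_norm] using hK.le_mul_dist (v k) b
  rw [Metric.tendsto_nhds]
  intro δ hδ
  set B := 1 + ‖b‖
  have hB : 0 < B := by positivity
  have hcpos : 0 < δ / (2 * B + δ) := by positivity
  filter_upwards [h1.bound hcpos] with k hk
  rw [dist_eq_norm]
  have h2 : ‖v k‖ ≤ ‖b‖ + ‖v k - b‖ := norm_le_norm_add_norm_sub' _ _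
  rw [Real.norm_of_nonneg (by positivity), div_mul_eq_mul_div, le_div_iff₀ (by positivity)] at hk
  have h3 : δ * (1 + ‖v k‖) ≤ δ * (B + ‖v k - b‖) := by
    apply mul_le_mul_of_nonneg_left _ hδ.le
    simp only [B]; linarith
  have h4 : ‖v k - b‖ * (2 * B) ≤ δ * B := by linarith
  nlinarith

/-- Lemma 3a: if KKT points of S(t_k) converge to a
nondegenerate T-stationary point of R, then eventually Q0(x̄) = Q0(x^k). -/
theorem statement10 {n : ℕ} {P Q : Type*} [Fintype P] [Fintype Q]
    (D : Setting n P Q) (t : ℕ → ℝ) (htpos : ∀ k, 0 < t k)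
    (ht0 : Filter.Tendsto t Filter.atTop (nhds 0))
    (X Y : ℕ → Vec n) (hK : ∀ k, KKT D (t k) (X k) (Y k))
    (xb yb : Vec n)
    (hconv : Filter.Tendsto (fun k => ((X k, Y k) : Vec n × Vec n))
      Filter.atTop (nhds (xb, yb)))
    (Mb : TMult n P Q) (hnd : NondegTStatAt D xb yb Mb) :
    ∃ K : ℕ, ∀ k ≥ K, Q0 D xb = Q0 D (X k) := by
  choose M hM using hK
  obtain ⟨⟨⟨-, -, -, hxy, hyb⟩, -, -, -, -, -, hT⟩, hL, hmu, -⟩ := hnd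
  have hX : Tendsto X atTop (𝓝 xb) := (continuous_fst.tendsto _).comp hconv
  have hY : Tendsto Y atTop (𝓝 yb) := (continuous_snd.tendsto _).comp hconv
  have hXi := fun i => (tendsto_pi_nhds.1 hX) i
  have hYi := fun i => (tendsto_pi_nhds.1 hY) i
  have hε := D.hεpos
  have hgrad : ∀ {φ : Vec n → ℝ}, ContDiff ℝ 2 φ → ∀ j,
      Tendsto (fun k => grad φ (X k) j) atTop (𝓝 (grad φ xb j)) := fun hφ j =>
    (tendsto_pi_nhds.1 (((continuous_grad hφ).tendsto xb).comp hX)) j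
  have hQ : ∀ q, q ∉ Q0 D xb → ∀ᶠ k in atTop, q ∉ Q0 D (X k) := fun q hq => by
    have := (((D.hg q).continuous.tendsto xb).comp hX).eventually_ne
      (show D.g q xb ≠ 0 by simpa [Q0] using hq)
    filter_upwards [this] with k hk
    simpa [Q0] using hk
  let v : ℕ → (P → ℝ) × (Q → ℝ) × Vec n := fun k =>
    ((M k).lam, (M k).mu1Ext D (X k), fun i => Y k i * (M k).eta (t k) (X k) (Y k) i)
  let b : (P → ℝ) × (Q → ℝ) × Vec n := (Mb.lam, fun q => if q ∈ Q0 D xb then Mb.mu1 q else 0,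
    fun j => (if j ∈ a01 xb yb then Mb.sig1 j else 0) + (if j ∈ a00 xb yb then Mb.rho1 j else 0))
  have hv1 : ∀ p, (fun k => (v k).1 p) =O[atTop] fun k => 1 + ‖v k‖ := fun p =>
    Asymptotics.IsBigO.of_bound 1 (Eventually.of_forall fun k => by
      rw [one_mul, Real.norm_of_nonneg (by positivity : 0 ≤ 1 + ‖v k‖)]
      linarith [norm_le_pi_norm (v k).1 p, norm_fst_le (v k)])
  have hv2 : ∀ q, (fun k => (v k).2.1 q) =O[atTop] fun k => 1 + ‖v k‖ := fun q =>
    Asymptotics.IsBigO.of_bound 1 (Eventually.of_forall fun k => by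
      rw [one_mul, Real.norm_of_nonneg (by positivity : 0 ≤ 1 + ‖v k‖)]
      linarith [norm_le_pi_norm (v k).2.1 q, norm_fst_le (v k).2, norm_snd_le (v k)])
  have hv3 : ∀ i, (fun k => (v k).2.2 i) =O[atTop] fun k => 1 + ‖v k‖ := fun i =>
    Asymptotics.IsBigO.of_bound 1 (Eventually.of_forall fun k => by
      rw [one_mul, Real.norm_of_nonneg (by positivity : 0 ≤ 1 + ‖v k‖)]
      linarith [norm_le_pi_norm (v k).2.2 i, norm_snd_le (v k).2, norm_snd_le (v k)])
  have hconst : ∀ a : ℝ, (fun _ : ℕ => a) =O[atTop] fun k => 1 + ‖v k‖ := fun a =>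
    Asymptotics.IsBigO.of_bound ‖a‖ (Eventually.of_forall fun k => by
      rw [Real.norm_of_nonneg (by positivity : 0 ≤ 1 + ‖v k‖)]
      nlinarith [norm_nonneg a, norm_nonneg (v k)])
  have hsmall : ∀ {u w : ℕ → ℝ}, u =O[atTop] (fun k => 1 + ‖v k‖) → Tendsto w atTop (𝓝 0) →
      (fun k => u k * w k) =o[atTop] fun k => 1 + ‖v k‖ := fun hu hw => by
    simpa using hu.mul_isLittleO ((Asymptotics.isLittleO_one_iff ℝ).2 hw)
  have hmu3 : (fun k => (M k).mu3) =O[atTop] fun k => 1 + ‖v k‖ := by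
    by_cases hs : ∑ i, yb i = (n : ℝ) - D.s
    · obtain ⟨i, hi0, hi1⟩ := hL.exists_interior hs
      have hbd : (fun k => X k i / Y k i) =O[atTop] fun _ => (1 : ℝ) :=
        ((hXi i).div (hYi i) hi0).isBigO_one ℝ
      have h1 : (fun k => D.c i - (v k).2.2 i * (X k i / Y k i)) =O[atTop]
          fun k => 1 + ‖v k‖ := (hconst _).sub (by simpa using (hv3 i).mul hbd)
      refine h1.congr' ?_ EventuallyEq.rfl
      filter_upwards [(hYi i).eventually_ne hi0, (hYi i).eventually_ne hi1] with k h0 h1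
      have := (hM k).2.2.2.2.2.2.2.2.snd_apply i
      simp only [h0, h1, if_false] at this
      simp only [v]
      field_simp
      linarith
    · have h1 : Tendsto (fun k => ∑ i, Y k i) atTop (𝓝 (∑ i, yb i)) :=
        tendsto_finsetSum _ fun i _ => hYi i
      refine (hconst 0).congr' ?_ EventuallyEq.rfl
      filter_upwards [h1.eventually_ne hs] with k hk
      rcases mul_eq_zero.1 (hM k).2.2.2.2.1 with h0 | h0
      · exact h0.symm
      · exact absurd (sub_eq_zero.1 h0) hk
  have hmain : (fun k => multMap D xb (v k) - multMap D xb b) =o[atTop] fun k => 1 + ‖v k‖ := by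
    refine Asymptotics.IsLittleO.prod_left (Asymptotics.isLittleO_pi.2 fun j => ?_)
      (Asymptotics.IsLittleO.prod_left (Asymptotics.isLittleO_pi.2 fun q => ?_)
        (Asymptotics.isLittleO_pi.2 fun i => ?_))
    · have hz : ∀ {φ : Vec n → ℝ}, ContDiff ℝ 2 φ →
          Tendsto (fun k => grad φ xb j - grad φ (X k) j) atTop (𝓝 0) := fun {φ} hφ => by
        simpa using (hgrad hφ j).const_sub (grad φ xb j)
      have h1 := Asymptotics.IsLittleO.sum (s := univ) fun p _ => hsmall (hv1 p) (hz (D.hh p))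
      have h2 := Asymptotics.IsLittleO.sum (s := univ) fun q _ => hsmall (hv2 q) (hz (D.hg q))
      refine ((h1.add h2).sub (hsmall (hconst 1) (hz D.hf))).congr_left fun k => ?_
      have e1 := (hM k).2.2.2.2.2.2.2.2.fst_apply j
      have e2 := hT.fst_apply j
      simp only [mul_sub, Finset.sum_apply, Finset.sum_sub_distrib, multMap, LinearMap.coe_mk,
        AddHom.coe_mk, Pi.sub_apply, v, b]
      linarith
    · refine (Asymptotics.isLittleO_zero _ _).congr' ?_ EventuallyEq.rfl
      by_cases hq : q ∈ Q0 D xb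
      · have : D.g q xb = 0 := by simpa [Q0] using hq
        exact Eventually.of_forall fun k => by simp [multMap, this]
      · filter_upwards [hQ q hq] with k hk
        simp [multMap, v, b, SMult.mu1Ext, hk, hq]
    · by_cases hx : xb i = 0
      · simp [multMap, hx]
      · have hy : yb i = 0 := (mul_eq_zero.1 (hxy i)).resolve_left hx
        have hr : Tendsto (fun k => Y k i / X k i) atTop (𝓝 0) := by
          have := (hYi i).div (hXi i) hx
          rwa [hy, zero_div] at this
        refine (hsmall ((hconst (D.c i)).sub hmu3) hr).congr' ?_ EventuallyEq.rfl
        filter_upwards [(hXi i).eventually_ne hx, (hYi i).eventually_ne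
          (show yb i ≠ 1 + D.ε by rw [hy]; linarith)] with k h0 h1
        have := (hM k).2.2.2.2.2.2.2.2.snd_apply i
        have hb : b.2.2 i = 0 := by simp [b, a01, a00, hx]
        simp only [multMap, LinearMap.coe_mk, AddHom.coe_mk, Pi.sub_apply, hx,
          if_false, hb, v, sub_zero]
        by_cases hYk : Y k i = 0
        · simp [hYk]
        · simp only [h1, hYk, if_false] at this
          field_simp
          linarith
  have hlim := tendsto_of_injective_of_isLittleO
    (hL.multMap_injective fun i => (hyb i).1) hmain
  refine eventually_atTop.1 ?_
  have hall : ∀ q, ∀ᶠ k in atTop, (q ∈ Q0 D xb ↔ q ∈ Q0 D (X k)) := fun q => by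
    by_cases hq : q ∈ Q0 D xb
    · have h1 : Tendsto (fun k => (v k).2.1 q) atTop (𝓝 (b.2.1 q)) :=
        (((continuous_apply q).comp (continuous_fst.comp continuous_snd)).tendsto b).comp hlim
      have h2 : b.2.1 q ≠ 0 := by simpa [b, hq] using (hmu q hq).ne'
      filter_upwards [h1.eventually_ne h2] with k hk
      refine iff_of_true hq ?_
      by_contra hn
      exact hk (by simp [v, SMult.mu1Ext, hn])
    · filter_upwards [hQ q hq] with k hk
      exact iff_of_false hq hk
  filter_upwards [eventually_all.2 hall] with k hk
  exact Finset.ext hk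

end Scholtes
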